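/- For every integer n ≥ 1 one has v₀(f(n+1)) = v₀(n); that is, the sequence (v₀(f(n)))_{n≥2} coincides with the original circle map sequence (v₀(n))_{n≥1}. -/

import Mathlib

open scoped Classical

noncomputable section

/-- The Gauss map. -/
def gaussMap (x : ℝ) : ℝ := Int.fract x⁻¹

/-- `pq α k` is the partial quotient `a_{k+1}` of the continued fraction of `α`. -/
def pq (α : ℝ) (k : ℕ) : ℕ := ⌊(gaussMap^[k] α)⁻¹⌋₊

/-- `qd α (n+1)` is the convergent denominator `q_n`; `qd α 0 = q_{-1} = 0`, `qd α 1 = q₀ = 1`. -/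
def qd (α : ℝ) : ℕ → ℕ
  | 0 => 0
  | 1 => 1
  | (n+2) => pq α n * qd α (n+1) + qd α n

/-- The circle map sequence of rotation number `α` (value `true` means letter `1`). -/
def v0 (α : ℝ) (n : ℤ) : Bool := decide (1 - α ≤ Int.fract ((n : ℝ) * α))

/-- The word `(v₀(m+1), …, v₀(m+n))`. -/
def word (α : ℝ) (m n : ℕ) : List Bool :=
  (List.range n).map (fun i => v0 α ((m : ℤ) + 1 + i))

/-- `w` is a factor (admissible word) of `v₀`. -/
def IsFactor (α : ℝ) (w : List Bool) : Prop := ∃ m : ℕ, w = word α m w.length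

/-- `w` occurs as a subword of the prefix `(v₀(1), …, v₀(N))`. -/
def OccursIn (α : ℝ) (w : List Bool) (N : ℕ) : Prop :=
  ∃ m : ℕ, m + w.length ≤ N ∧ w = word α m w.length

/-- `exhaust α n` is `f(n)`: the least `N` such that every factor of length `n`
occurs in `(v₀(1), …, v₀(N))`. -/
def exhaust (α : ℝ) (n : ℕ) : ℕ :=
  sInf {N | ∀ w : List Bool, w.length = n → IsFactor α w → OccursIn α w N}

/-- number of occurrences of `w` in the prefix `(v₀(1), …, v₀(N))`. -/
def occCount (α : ℝ) (w : List Bool) (N : ℕ) : ℕ :=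
  ((Finset.range N).filter (fun m => m + w.length ≤ N ∧ word α m w.length = w)).card

/-- the word `(v(m), v(m+1), …, v(m+n-1))` of a two-sided sequence. -/
def wordAt (v : ℤ → Bool) (m : ℤ) (n : ℕ) : List Bool :=
  (List.range n).map (fun i => v (m + i))

/-- the hull `Ω`: closure of the set of translates of `v₀`. -/
def hull (α : ℝ) : Set (ℤ → Bool) :=
  closure {u | ∃ m : ℤ, u = fun n => v0 α (n - m)}

/-!
The number of letters `1` in `(v₀(x), …, v₀(x+n-1))` is `⌊(x+n)α⌋ - ⌊xα⌋`, hence `⌊nα⌋` or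
`⌊nα⌋ + 1`. If both `0w` and `1w` are factors, these two bounds force `w` to contain exactly
`⌊(k+1)α⌋` letters `1`, where `k` is its length. The same holds for each prefix of `w`, so the
`k`-th letter of `w` is `⌊(k+1)α⌋ - ⌊kα⌋ = v₀(k)` and `w` is a prefix of `(v₀(1), v₀(2), …)`.

By minimality of `f(n+1)`, the last `n + 1` letters of `(v₀(1), …, v₀(f(n+1)))` form a factor `at`,
with `a` a letter, which occurs there for the first time. The factor `tb` one place to the right has
an earlier occurrence. If that occurrence is at the very beginning, then `t` is a prefix of
`(v₀(1), v₀(2), …)`. Otherwise it is preceded by a letter, which differs from `a` because `at` is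
new; then both `0t` and `1t` are factors and `t` is again a prefix. Comparing last letters of `t`
and of `(v₀(1), …, v₀(n))` gives `v₀(f(n+1)) = v₀(n)`.
-/

section WordAt

variable (v : ℤ → Bool) (x : ℤ) (n : ℕ)

theorem length_wordAt : (wordAt v x n).length = n := by
  simp [wordAt]

theorem wordAt_succ : wordAt v x (n + 1) = v x :: wordAt v (x + 1) n := by
  simp [wordAt, List.range_succ_eq_map, List.flatMap_map, List.map_flatMap, add_assoc,
    add_comm (1 : ℤ)]

theorem wordAt_succ' : wordAt v x (n + 1) = wordAt v x n ++ [v (x + n)] := by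
  simp [wordAt, List.range_succ]

variable {v x n} {y : ℤ} {w : List Bool} {a : Bool}

theorem wordAt_eq_of_wordAt_succ_eq (h : wordAt v x (n + 1) = wordAt v y (n + 1)) :
    wordAt v x n = wordAt v y n := by
  rw [wordAt_succ', wordAt_succ'] at h
  exact List.append_inj_left' h rfl

/-- A word is left special in a two-sided sequence `v` over the alphabet `Bool` if both of its
extensions by one letter to the left are factors of `v`. -/
def IsLeftSpecial (v : ℤ → Bool) (w : List Bool) : Prop :=
  ∀ a, ∃ x, wordAt v x (w.length + 1) = a :: w

theorem IsLeftSpecial.of_append_singleton (h : IsLeftSpecial v (w ++ [a])) :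
    IsLeftSpecial v w := by
  intro b
  obtain ⟨x, hx⟩ := h b
  rw [List.length_append, List.length_singleton, wordAt_succ', ← List.cons_append] at hx
  exact ⟨x, List.append_inj_left' hx rfl⟩

theorem isLeftSpecial_wordAt (hw : wordAt v (x + 1) n = wordAt v (y + 1) n) (hv : v x ≠ v y) :
    IsLeftSpecial v (wordAt v (x + 1) n) := by
  intro a
  rw [length_wordAt]
  rcases Bool.eq_or_eq_not a (v x) with rfl | rfl
  · exact ⟨x, wordAt_succ v x n⟩
  · exact ⟨y, by rw [wordAt_succ, hw, Bool.eq_not.2 hv.symm]⟩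

end WordAt

section CircleMap

theorem count_true_singleton (a : Bool) : [a].count true = a.toNat := by
  cases a <;> rfl

variable {α : ℝ}

theorem floor_add_one_mul_eq_floor_mul_add_toNat_v0 (h0 : 0 ≤ α) (h1 : α ≤ 1) (k : ℤ) :
    ⌊((k : ℝ) + 1) * α⌋ = ⌊(k : ℝ) * α⌋ + (v0 α k).toNat := by
  have hsplit := Int.floor_add_fract ((k : ℝ) * α)
  have hnonneg := Int.fract_nonneg ((k : ℝ) * α)
  have hlt := Int.fract_lt_one ((k : ℝ) * α)
  rw [Int.floor_eq_iff]
  by_cases h : 1 - α ≤ Int.fract ((k : ℝ) * α)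
  · simp only [v0, h, decide_true, Bool.toNat_true]
    push_cast
    constructor <;> linarith
  · simp only [v0, h, decide_false, Bool.toNat_false]
    push_cast
    constructor <;> linarith

theorem count_true_wordAt_v0 (h0 : 0 ≤ α) (h1 : α ≤ 1) (x : ℤ) (n : ℕ) :
    ((wordAt (v0 α) x n).count true : ℤ) = ⌊((x : ℝ) + n) * α⌋ - ⌊(x : ℝ) * α⌋ := by
  induction n with
  | zero => simp [wordAt]
  | succ n ih =>
    have hstep := floor_add_one_mul_eq_floor_mul_add_toNat_v0 h0 h1 (x + n)
    rw [wordAt_succ', List.count_append, count_true_singleton]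
    push_cast [← add_assoc] at hstep ⊢
    linarith

theorem floor_mul_le_count_true_wordAt_v0 (h0 : 0 ≤ α) (h1 : α ≤ 1) (x : ℤ) (n : ℕ) :
    ⌊(n : ℝ) * α⌋ ≤ (wordAt (v0 α) x n).count true := by
  rw [count_true_wordAt_v0 h0 h1, add_mul]
  linarith [Int.le_floor_add ((x : ℝ) * α) (n * α)]

theorem count_true_wordAt_v0_le_floor_mul_add_one (h0 : 0 ≤ α) (h1 : α ≤ 1) (x : ℤ) (n : ℕ) :
    ((wordAt (v0 α) x n).count true : ℤ) ≤ ⌊(n : ℝ) * α⌋ + 1 := by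
  rw [count_true_wordAt_v0 h0 h1, add_mul]
  linarith [Int.le_floor_add_floor ((x : ℝ) * α) (n * α)]

theorem IsLeftSpecial.count_true_eq (h0 : 0 ≤ α) (h1 : α ≤ 1) {w : List Bool}
    (h : IsLeftSpecial (v0 α) w) :
    (w.count true : ℤ) = ⌊((w.length : ℝ) + 1) * α⌋ := by
  obtain ⟨x, hx⟩ := h true
  obtain ⟨y, hy⟩ := h false
  have hupper := count_true_wordAt_v0_le_floor_mul_add_one h0 h1 x (w.length + 1)
  have hlower := floor_mul_le_count_true_wordAt_v0 h0 h1 y (w.length + 1)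
  rw [hx, List.count_cons_self] at hupper
  rw [hy, List.count_cons_of_ne (by decide)] at hlower
  push_cast at hupper hlower
  exact le_antisymm (by linarith) hlower

theorem IsLeftSpecial.eq_wordAt_one (h0 : 0 ≤ α) (h1 : α ≤ 1) {w : List Bool}
    (h : IsLeftSpecial (v0 α) w) :
    w = wordAt (v0 α) 1 w.length := by
  induction w using List.reverseRecOn with
  | nil => rfl
  | append_singleton w a ih =>
    have hw := h.of_append_singleton
    have ha : a = v0 α (1 + w.length) := by
      apply Function.LeftInverse.injective Bool.ofNat_toNat
      have hcount := hw.count_true_eq h0 h1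
      have hcount' := h.count_true_eq h0 h1
      have hstep := floor_add_one_mul_eq_floor_mul_add_toNat_v0 h0 h1 (1 + w.length)
      rw [List.count_append, count_true_singleton, List.length_append, List.length_singleton]
        at hcount'
      push_cast [add_comm (1 : ℝ)] at hcount' hstep
      omega
    rw [List.length_append, List.length_singleton, wordAt_succ', ← ih hw, ha]

end CircleMap

section Exhaust

variable {α : ℝ} {m n N : ℕ}

theorem word_eq_wordAt (α : ℝ) (m n : ℕ) : word α m n = wordAt (v0 α) (m + 1) n := rfl

theorem length_word (α : ℝ) (m n : ℕ) : (word α m n).length = n :=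
  length_wordAt _ _ _

theorem forall_isFactor_occursIn_iff :
    (∀ w : List Bool, w.length = n → IsFactor α w → OccursIn α w N) ↔
      ∀ k, ∃ m, m + n ≤ N ∧ word α k n = word α m n := by
  constructor
  · intro h k
    simpa only [OccursIn, length_word] using h _ (length_word α k n) ⟨k, by rw [length_word]⟩
  · rintro h w rfl ⟨k, hk⟩
    obtain ⟨m, hm, hkm⟩ := h k
    exact ⟨m, hm, hk.trans hkm⟩

theorem exists_forall_exists_word_eq (α : ℝ) (n : ℕ) :
    ∃ N, ∀ k, ∃ m, m + n ≤ N ∧ word α k n = word α m n := by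
  have hfin : (Set.range fun k => word α k n).Finite :=
    (List.finite_length_eq Bool n).subset (Set.range_subset_iff.2 fun k => length_word α k n)
  have hlarge : ∀ᶠ N in Filter.atTop,
      ∀ w ∈ Set.range fun k => word α k n, ∃ m, m + n ≤ N ∧ w = word α m n := by
    rw [Filter.eventually_all_finite hfin]
    rintro _ ⟨k, rfl⟩
    filter_upwards [Filter.eventually_ge_atTop (k + n)] with N hN
    exact ⟨k, hN, rfl⟩
  exact hlarge.exists.imp fun N hN k => hN _ (Set.mem_range_self k)

theorem exhaust_le_iff :
    exhaust α n ≤ N ↔ ∀ k, ∃ m, m + n ≤ N ∧ word α k n = word α m n := by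
  simp only [exhaust, forall_isFactor_occursIn_iff]
  refine ⟨fun h k => ?_, fun h => Nat.sInf_le h⟩
  obtain ⟨m, hm, hkm⟩ := Nat.sInf_mem (exists_forall_exists_word_eq α n) k
  exact ⟨m, hm.trans h, hkm⟩

theorem le_exhaust (α : ℝ) (n : ℕ) : n ≤ exhaust α n := by
  obtain ⟨m, hm, -⟩ := exhaust_le_iff.1 le_rfl 0
  exact le_of_add_le_right hm

theorem word_ne_word_of_exhaust_eq {M : ℕ} (hM : exhaust α n = M + n) (hm : m < M) :
    word α m n ≠ word α M n := by
  intro heq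
  have hle : exhaust α n ≤ exhaust α n - 1 := by
    rw [exhaust_le_iff]
    intro k
    obtain ⟨l, hl, hkl⟩ := exhaust_le_iff.1 le_rfl k
    rcases eq_or_ne l M with rfl | hne
    · exact ⟨m, by omega, hkl.trans heq.symm⟩
    · exact ⟨l, by omega, hkl⟩
  omega

theorem word_eq_word_zero_of_exhaust_succ_eq (h0 : 0 ≤ α) (h1 : α ≤ 1)
    (hm : exhaust α (n + 1) = m + n) : word α m n = word α 0 n := by
  have hpos : 1 ≤ m := by
    have := le_exhaust α (n + 1)
    omega
  obtain ⟨M, rfl⟩ := Nat.exists_eq_add_of_le' hpos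
  have hM : exhaust α (n + 1) = M + (n + 1) := by omega
  obtain ⟨l, hl, hMl⟩ := exhaust_le_iff.1 le_rfl (M + 1)
  have htail : word α (M + 1) n = word α l n := wordAt_eq_of_wordAt_succ_eq hMl
  rcases l with _ | l
  · exact htail
  have hhead : v0 α (M + 1 : ℕ) ≠ v0 α (l + 1 : ℕ) := by
    intro heq
    refine word_ne_word_of_exhaust_eq hM (by omega : l < M) ?_
    simp only [word_eq_wordAt, wordAt_succ] at htail ⊢
    push_cast at htail heq
    rw [htail, heq]
  have hprefix := (isLeftSpecial_wordAt htail hhead).eq_wordAt_one h0 h1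
  rwa [length_wordAt] at hprefix

theorem v0_exhaust_general (h0 : 0 ≤ α) (h1 : α ≤ 1) (hn : 1 ≤ n) :
    v0 α (exhaust α (n + 1)) = v0 α n := by
  obtain ⟨n, rfl⟩ := Nat.exists_eq_add_of_le' hn
  obtain ⟨m, hm⟩ := Nat.exists_eq_add_of_le' ((Nat.le_succ _).trans (le_exhaust α (n + 1 + 1)))
  have hword := word_eq_word_zero_of_exhaust_succ_eq h0 h1 hm
  simp only [word_eq_wordAt, wordAt_succ'] at hword
  have hlast := List.singleton_inj.1 (List.append_inj_right' hword rfl)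
  rw [hm]
  convert hlast using 2 <;> push_cast <;> ring

end Exhaust

/-- `v₀(f(n+1)) = v₀(n)` for all `n ≥ 1`: the sequence
`(v₀(f(n)))_{n ≥ 2}` coincides with the original circle map sequence `(v₀(n))_{n ≥ 1}`. -/
theorem v0_exhaust (α : ℝ) (hirr : Irrational α) (h0 : 0 < α) (h1 : α < 1) :
    ∀ n : ℕ, 1 ≤ n → v0 α (exhaust α (n + 1)) = v0 α n :=
  fun _ hn => v0_exhaust_general h0.le h1.le hn

end
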